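/- Pointwise relatedness implies exact equality for well-typed terms: if M ∈ A [Ψ], N ∈ A [Ψ], and for every total dimension substitution ψ : Ψ′ → Ψ the instances Mψ and Nψ evaluate to values related in the PER named by the value A′ of Aψ (i.e. Mψ ≈ Nψ ∈ ⟦A′⟧ after evaluation), then M ≐ N ∈ A [Ψ]. -/

import Mathlib

/-!
Formalization of the syntax, operational semantics, and meaning explanations of
Angiuli–Harper–Wilson computational higher type theory ("Computational
higher-dimensional type theory").  Dimension binders are handled in
locally-nameless style: free dimension names are natural numbers (`Dim.fvar`),
bound dimension variables are de Bruijn indices (`Dim.bvar`).  Term variables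
are de Bruijn indices (`Tm.var`).
-/

namespace CHTT

/-- Dimension terms: the constants 0 and 1, free dimension names, and bound
dimension variables (de Bruijn, for the binders `x.A`, `y.N`, `x.L`). -/
inductive Dim : Type
  | d0 : Dim
  | d1 : Dim
  | fvar : ℕ → Dim
  | bvar : ℕ → Dim
deriving DecidableEq, Repr

namespace Dim

/-- Apply a dimension substitution (acting on free dimension names). -/
def subst (ψ : ℕ → Dim) : Dim → Dim
  | fvar x => ψ x
  | d0 => d0
  | d1 => d1
  | bvar i => bvar i

/-- Instantiate the bound dimension variable `k` with `r`. -/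
def openAt (k : ℕ) (r : Dim) : Dim → Dim
  | bvar i => if i = k then r else bvar i
  | fvar x => fvar x
  | d0 => d0
  | d1 => d1

/-- Abstract the free dimension name `x` to the bound variable `k`. -/
def closeAt (k x : ℕ) : Dim → Dim
  | fvar y => if y = x then bvar k else fvar y
  | bvar i => bvar i
  | d0 => d0
  | d1 => d1

/-- Free dimension names of a dimension term. -/
def fd : Dim → Finset ℕ
  | fvar x => {x}
  | bvar _ => ∅
  | d0 => ∅
  | d1 => ∅

end Dim

/-- A dimension term is a constant (`0` or `1`). -/
def IsConst (r : Dim) : Prop := r = Dim.d0 ∨ r = Dim.d1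

/-- Well-formed dimension term relative to a dimension context `Ψ`. -/
def wfDim (Ψ : Finset ℕ) : Dim → Prop
  | Dim.d0 => True
  | Dim.d1 => True
  | Dim.fvar x => x ∈ Ψ
  | Dim.bvar _ => False

/-- Terms of computational higher type theory. -/
inductive Tm : Type
  | var : ℕ → Tm                              -- term variable (de Bruijn)
  | arr : Tm → Tm → Tm                        -- A → B
  | prod : Tm → Tm → Tm                       -- A × B
  | bool : Tm
  | notb : Dim → Tm                           -- not(r)
  | circle : Tm                               -- S¹
  | lam : Tm → Tm                             -- λa.M
  | app : Tm → Tm → Tm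
  | pair : Tm → Tm → Tm
  | fst : Tm → Tm
  | snd : Tm → Tm
  | tt : Tm                                   -- true
  | ff : Tm                                   -- false
  | ifb : Tm → Tm → Tm → Tm → Tm              -- if(A; M; T; F)
  | notel : Dim → Tm → Tm                     -- not_el(r; M)
  | base : Tm
  | loop : Dim → Tm
  | celim : Tm → Tm → Tm → Tm → Tm            -- S¹-elim(A; M; P; x.L), L binds dim bvar 0
  | coe : Tm → Dim → Dim → Tm → Tm            -- coe(x.A; r⇝r'; M), A binds dim bvar 0
  | hcom : Dim → Tm → Dim → Dim → Tm → Tm → Tm → Tm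
      -- hcom^{r₁}_A(r⇝r'; M; y.N⁰, y.N¹), the tubes N⁰ N¹ bind dim bvar 0
deriving DecidableEq, Repr

namespace Tm

/-- Apply a dimension substitution (acting on free dimension names) to a term. -/
def dsubst (ψ : ℕ → Dim) : Tm → Tm
  | var a => var a
  | arr A B => arr (A.dsubst ψ) (B.dsubst ψ)
  | prod A B => prod (A.dsubst ψ) (B.dsubst ψ)
  | bool => bool
  | notb r => notb (r.subst ψ)
  | circle => circle
  | lam M => lam (M.dsubst ψ)
  | app M N => app (M.dsubst ψ) (N.dsubst ψ)
  | pair M N => pair (M.dsubst ψ) (N.dsubst ψ)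
  | fst M => fst (M.dsubst ψ)
  | snd M => snd (M.dsubst ψ)
  | tt => tt
  | ff => ff
  | ifb A M T F => ifb (A.dsubst ψ) (M.dsubst ψ) (T.dsubst ψ) (F.dsubst ψ)
  | notel r M => notel (r.subst ψ) (M.dsubst ψ)
  | base => base
  | loop r => loop (r.subst ψ)
  | celim A M P L => celim (A.dsubst ψ) (M.dsubst ψ) (P.dsubst ψ) (L.dsubst ψ)
  | coe A r r' M => coe (A.dsubst ψ) (r.subst ψ) (r'.subst ψ) (M.dsubst ψ)
  | hcom e A r r' M N0 N1 =>
      hcom (e.subst ψ) (A.dsubst ψ) (r.subst ψ) (r'.subst ψ) (M.dsubst ψ)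
        (N0.dsubst ψ) (N1.dsubst ψ)

/-- Substitution of a dimension term for a single free dimension name:
`M⟨r/x⟩`. -/
def dsubstName (x : ℕ) (r : Dim) (M : Tm) : Tm :=
  M.dsubst (fun y => if y = x then r else Dim.fvar y)

/-- Instantiate the bound dimension variable `k` with the dimension `r`. -/
def dopenAt (k : ℕ) (r : Dim) : Tm → Tm
  | var a => var a
  | arr A B => arr (A.dopenAt k r) (B.dopenAt k r)
  | prod A B => prod (A.dopenAt k r) (B.dopenAt k r)
  | bool => bool
  | notb r1 => notb (r1.openAt k r)
  | circle => circle
  | lam M => lam (M.dopenAt k r)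
  | app M N => app (M.dopenAt k r) (N.dopenAt k r)
  | pair M N => pair (M.dopenAt k r) (N.dopenAt k r)
  | fst M => fst (M.dopenAt k r)
  | snd M => snd (M.dopenAt k r)
  | tt => tt
  | ff => ff
  | ifb A M T F => ifb (A.dopenAt k r) (M.dopenAt k r) (T.dopenAt k r) (F.dopenAt k r)
  | notel r1 M => notel (r1.openAt k r) (M.dopenAt k r)
  | base => base
  | loop r1 => loop (r1.openAt k r)
  | celim A M P L =>
      celim (A.dopenAt k r) (M.dopenAt k r) (P.dopenAt k r) (L.dopenAt (k+1) r)
  | coe A r1 r2 M =>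
      coe (A.dopenAt (k+1) r) (r1.openAt k r) (r2.openAt k r) (M.dopenAt k r)
  | hcom e A r1 r2 M N0 N1 =>
      hcom (e.openAt k r) (A.dopenAt k r) (r1.openAt k r) (r2.openAt k r)
        (M.dopenAt k r) (N0.dopenAt (k+1) r) (N1.dopenAt (k+1) r)

/-- Instantiate the outermost bound dimension variable: for a dimension binder
`y.N`, `N.dopen r` is `N⟨r/y⟩`. -/
def dopen (r : Dim) (M : Tm) : Tm := M.dopenAt 0 r

/-- Abstract the free dimension name `x` to the bound variable `k`. -/
def closeAt (k x : ℕ) : Tm → Tm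
  | var a => var a
  | arr A B => arr (A.closeAt k x) (B.closeAt k x)
  | prod A B => prod (A.closeAt k x) (B.closeAt k x)
  | bool => bool
  | notb r1 => notb (r1.closeAt k x)
  | circle => circle
  | lam M => lam (M.closeAt k x)
  | app M N => app (M.closeAt k x) (N.closeAt k x)
  | pair M N => pair (M.closeAt k x) (N.closeAt k x)
  | fst M => fst (M.closeAt k x)
  | snd M => snd (M.closeAt k x)
  | tt => tt
  | ff => ff
  | ifb A M T F => ifb (A.closeAt k x) (M.closeAt k x) (T.closeAt k x) (F.closeAt k x)
  | notel r1 M => notel (r1.closeAt k x) (M.closeAt k x)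
  | base => base
  | loop r1 => loop (r1.closeAt k x)
  | celim A M P L =>
      celim (A.closeAt k x) (M.closeAt k x) (P.closeAt k x) (L.closeAt (k+1) x)
  | coe A r1 r2 M =>
      coe (A.closeAt (k+1) x) (r1.closeAt k x) (r2.closeAt k x) (M.closeAt k x)
  | hcom e A r1 r2 M N0 N1 =>
      hcom (e.closeAt k x) (A.closeAt k x) (r1.closeAt k x) (r2.closeAt k x)
        (M.closeAt k x) (N0.closeAt (k+1) x) (N1.closeAt (k+1) x)

/-- Abstract a free dimension name, producing the body of a dimension binder:
`x.(M)`. -/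
def close (x : ℕ) (M : Tm) : Tm := M.closeAt 0 x

/-- Free dimension names of a term: `fd(M)`. -/
def fd : Tm → Finset ℕ
  | var _ => ∅
  | arr A B => A.fd ∪ B.fd
  | prod A B => A.fd ∪ B.fd
  | bool => ∅
  | notb r => r.fd
  | circle => ∅
  | lam M => M.fd
  | app M N => M.fd ∪ N.fd
  | pair M N => M.fd ∪ N.fd
  | fst M => M.fd
  | snd M => M.fd
  | tt => ∅
  | ff => ∅
  | ifb A M T F => A.fd ∪ M.fd ∪ T.fd ∪ F.fd
  | notel r M => r.fd ∪ M.fd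
  | base => ∅
  | loop r => r.fd
  | celim A M P L => A.fd ∪ M.fd ∪ P.fd ∪ L.fd
  | coe A r r' M => A.fd ∪ r.fd ∪ r'.fd ∪ M.fd
  | hcom e A r r' M N0 N1 => e.fd ∪ A.fd ∪ r.fd ∪ r'.fd ∪ M.fd ∪ N0.fd ∪ N1.fd

/-- Shift term variables `≥ c` up by one (for going under a `lam`). -/
def lift (c : ℕ) : Tm → Tm
  | var a => if a < c then var a else var (a+1)
  | arr A B => arr (A.lift c) (B.lift c)
  | prod A B => prod (A.lift c) (B.lift c)
  | bool => bool
  | notb r => notb r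
  | circle => circle
  | lam M => lam (M.lift (c+1))
  | app M N => app (M.lift c) (N.lift c)
  | pair M N => pair (M.lift c) (N.lift c)
  | fst M => fst (M.lift c)
  | snd M => snd (M.lift c)
  | tt => tt
  | ff => ff
  | ifb A M T F => ifb (A.lift c) (M.lift c) (T.lift c) (F.lift c)
  | notel r M => notel r (M.lift c)
  | base => base
  | loop r => loop r
  | celim A M P L => celim (A.lift c) (M.lift c) (P.lift c) (L.lift c)
  | coe A r r' M => coe (A.lift c) r r' (M.lift c)
  | hcom e A r r' M N0 N1 =>
      hcom e (A.lift c) r r' (M.lift c) (N0.lift c) (N1.lift c)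

/-- Substitute `N` for term variable `k` (de Bruijn), decrementing the
variables above `k`: used for β-reduction `M[N/a]`. -/
def tsubst : Tm → ℕ → Tm → Tm
  | var a, k, N => if a = k then N else if k < a then var (a-1) else var a
  | arr A B, k, N => arr (A.tsubst k N) (B.tsubst k N)
  | prod A B, k, N => prod (A.tsubst k N) (B.tsubst k N)
  | bool, _, _ => bool
  | notb r, _, _ => notb r
  | circle, _, _ => circle
  | lam M, k, N => lam (M.tsubst (k+1) (N.lift 0))
  | app M M', k, N => app (M.tsubst k N) (M'.tsubst k N)
  | pair M M', k, N => pair (M.tsubst k N) (M'.tsubst k N)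
  | fst M, k, N => fst (M.tsubst k N)
  | snd M, k, N => snd (M.tsubst k N)
  | tt, _, _ => tt
  | ff, _, _ => ff
  | ifb A M T F, k, N => ifb (A.tsubst k N) (M.tsubst k N) (T.tsubst k N) (F.tsubst k N)
  | notel r M, k, N => notel r (M.tsubst k N)
  | base, _, _ => base
  | loop r, _, _ => loop r
  | celim A M P L, k, N => celim (A.tsubst k N) (M.tsubst k N) (P.tsubst k N) (L.tsubst k N)
  | coe A r r' M, k, N => coe (A.tsubst k N) r r' (M.tsubst k N)
  | hcom e A r r' M N0 N1, k, N =>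
      hcom e (A.tsubst k N) r r' (M.tsubst k N) (N0.tsubst k N) (N1.tsubst k N)

/-- Simultaneous substitution of a list of (closed) terms for the term
variables, the head of the list standing for variable `0`. -/
def msubstAt (d : ℕ) (γ : List Tm) : Tm → Tm
  | var a => if a < d then var a else γ.getD (a - d) (var a)
  | arr A B => arr (A.msubstAt d γ) (B.msubstAt d γ)
  | prod A B => prod (A.msubstAt d γ) (B.msubstAt d γ)
  | bool => bool
  | notb r => notb r
  | circle => circle
  | lam M => lam (M.msubstAt (d+1) γ)
  | app M N => app (M.msubstAt d γ) (N.msubstAt d γ)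
  | pair M N => pair (M.msubstAt d γ) (N.msubstAt d γ)
  | fst M => fst (M.msubstAt d γ)
  | snd M => snd (M.msubstAt d γ)
  | tt => tt
  | ff => ff
  | ifb A M T F => ifb (A.msubstAt d γ) (M.msubstAt d γ) (T.msubstAt d γ) (F.msubstAt d γ)
  | notel r M => notel r (M.msubstAt d γ)
  | base => base
  | loop r => loop r
  | celim A M P L => celim (A.msubstAt d γ) (M.msubstAt d γ) (P.msubstAt d γ) (L.msubstAt d γ)
  | coe A r r' M => coe (A.msubstAt d γ) r r' (M.msubstAt d γ)
  | hcom e A r r' M N0 N1 =>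
      hcom e (A.msubstAt d γ) r r' (M.msubstAt d γ) (N0.msubstAt d γ) (N1.msubstAt d γ)

/-- Simultaneous (closing) term substitution `Mγ`. -/
def msubst (γ : List Tm) (M : Tm) : Tm := M.msubstAt 0 γ

end Tm

/-- `not(M)`, the boolean negation term, abbreviates `if(bool; M; false; true)`. -/
def notTm (M : Tm) : Tm := Tm.ifb Tm.bool M Tm.ff Tm.tt

/-- The canonical forms (values) of the language. -/
inductive IsVal : Tm → Prop
  | arr (A B : Tm) : IsVal (Tm.arr A B)
  | prod (A B : Tm) : IsVal (Tm.prod A B)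
  | bool : IsVal Tm.bool
  | notb (x : ℕ) : IsVal (Tm.notb (Dim.fvar x))
  | circle : IsVal Tm.circle
  | lam (M : Tm) : IsVal (Tm.lam M)
  | pair (M N : Tm) : IsVal (Tm.pair M N)
  | tt : IsVal Tm.tt
  | ff : IsVal Tm.ff
  | base : IsVal Tm.base
  | loop (x : ℕ) : IsVal (Tm.loop (Dim.fvar x))
  | notel (x : ℕ) (M : Tm) : IsVal (Tm.notel (Dim.fvar x) M)
  | hcomBool {x : ℕ} {r r' : Dim} (M N0 N1 : Tm) :
      r ≠ r' → IsVal (Tm.hcom (Dim.fvar x) Tm.bool r r' M N0 N1)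
  | hcomCircle {x : ℕ} {r r' : Dim} (M N0 N1 : Tm) :
      r ≠ r' → IsVal (Tm.hcom (Dim.fvar x) Tm.circle r r' M N0 N1)

/-- The one-step deterministic weak head reduction `M ↦ M′`. -/
inductive Step : Tm → Tm → Prop
  -- types
  | notbConst {ε : Dim} : IsConst ε → Step (Tm.notb ε) Tm.bool
  -- hcom/coe evaluate their type subscript
  | coeTy {A A' : Tm} {r r' : Dim} {M : Tm} :
      Step A A' → Step (Tm.coe A r r' M) (Tm.coe A' r r' M)
  | hcomTy {e : Dim} {A A' : Tm} {r r' : Dim} {M N0 N1 : Tm} :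
      Step A A' → Step (Tm.hcom e A r r' M N0 N1) (Tm.hcom e A' r r' M N0 N1)
  -- function types
  | appL {M M' N : Tm} : Step M M' → Step (Tm.app M N) (Tm.app M' N)
  | appBeta {M N : Tm} : Step (Tm.app (Tm.lam M) N) (M.tsubst 0 N)
  | hcomArr {e : Dim} {A B : Tm} {r r' : Dim} {M N0 N1 : Tm} :
      Step (Tm.hcom e (Tm.arr A B) r r' M N0 N1)
        (Tm.lam (Tm.hcom e B r r'
          (Tm.app (M.lift 0) (Tm.var 0))
          (Tm.app (N0.lift 0) (Tm.var 0))
          (Tm.app (N1.lift 0) (Tm.var 0))))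
  | coeArr {A B : Tm} {r r' : Dim} {M : Tm} :
      Step (Tm.coe (Tm.arr A B) r r' M)
        (Tm.lam (Tm.coe B r r'
          (Tm.app (M.lift 0) (Tm.coe A r' r (Tm.var 0)))))
  -- product types
  | fstCong {M M' : Tm} : Step M M' → Step (Tm.fst M) (Tm.fst M')
  | sndCong {M M' : Tm} : Step M M' → Step (Tm.snd M) (Tm.snd M')
  | fstPair {M N : Tm} : Step (Tm.fst (Tm.pair M N)) M
  | sndPair {M N : Tm} : Step (Tm.snd (Tm.pair M N)) N
  | hcomProd {e : Dim} {A B : Tm} {r r' : Dim} {M N0 N1 : Tm} :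
      Step (Tm.hcom e (Tm.prod A B) r r' M N0 N1)
        (Tm.pair
          (Tm.hcom e A r r' (Tm.fst M) (Tm.fst N0) (Tm.fst N1))
          (Tm.hcom e B r r' (Tm.snd M) (Tm.snd N0) (Tm.snd N1)))
  | coeProd {A B : Tm} {r r' : Dim} {M : Tm} :
      Step (Tm.coe (Tm.prod A B) r r' M)
        (Tm.pair (Tm.coe A r r' (Tm.fst M)) (Tm.coe B r r' (Tm.snd M)))
  -- booleans
  | hcomBool0 {A : Tm} {r r' : Dim} {M N0 N1 : Tm} :
      A = Tm.bool → Step (Tm.hcom Dim.d0 A r r' M N0 N1) (N0.dopen r')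
  | hcomBool1 {A : Tm} {r r' : Dim} {M N0 N1 : Tm} :
      A = Tm.bool → Step (Tm.hcom Dim.d1 A r r' M N0 N1) (N1.dopen r')
  | hcomBoolRefl {x : ℕ} {r : Dim} {M N0 N1 : Tm} :
      Step (Tm.hcom (Dim.fvar x) Tm.bool r r M N0 N1) M
  | ifbCong {A M M' T F : Tm} :
      Step M M' → Step (Tm.ifb A M T F) (Tm.ifb A M' T F)
  | ifbTrue {A T F : Tm} : Step (Tm.ifb A Tm.tt T F) T
  | ifbFalse {A T F : Tm} : Step (Tm.ifb A Tm.ff T F) F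
  | ifbHcom {A : Tm} {x : ℕ} {r r' : Dim} {M N0 N1 T F : Tm} :
      r ≠ r' →
      Step (Tm.ifb A (Tm.hcom (Dim.fvar x) Tm.bool r r' M N0 N1) T F)
        (Tm.hcom (Dim.fvar x) A r r'
          (Tm.ifb A M T F) (Tm.ifb A N0 T F) (Tm.ifb A N1 T F))
  | coeBool {r r' : Dim} {M : Tm} : Step (Tm.coe Tm.bool r r' M) M
  -- circle
  | hcomCircle0 {A : Tm} {r r' : Dim} {M N0 N1 : Tm} :
      A = Tm.circle → Step (Tm.hcom Dim.d0 A r r' M N0 N1) (N0.dopen r')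
  | hcomCircle1 {A : Tm} {r r' : Dim} {M N0 N1 : Tm} :
      A = Tm.circle → Step (Tm.hcom Dim.d1 A r r' M N0 N1) (N1.dopen r')
  | hcomCircleRefl {x : ℕ} {r : Dim} {M N0 N1 : Tm} :
      Step (Tm.hcom (Dim.fvar x) Tm.circle r r M N0 N1) M
  | loopConst {ε : Dim} : IsConst ε → Step (Tm.loop ε) Tm.base
  | celimCong {A M M' P L : Tm} :
      Step M M' → Step (Tm.celim A M P L) (Tm.celim A M' P L)
  | celimBase {A P L : Tm} : Step (Tm.celim A Tm.base P L) P
  | celimLoop {A P L : Tm} {w : ℕ} :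
      Step (Tm.celim A (Tm.loop (Dim.fvar w)) P L) (L.dopen (Dim.fvar w))
  | celimHcom {A : Tm} {x : ℕ} {r r' : Dim} {M N0 N1 P L : Tm} :
      r ≠ r' →
      Step (Tm.celim A (Tm.hcom (Dim.fvar x) Tm.circle r r' M N0 N1) P L)
        (Tm.hcom (Dim.fvar x) A r r'
          (Tm.celim A M P L) (Tm.celim A N0 P L) (Tm.celim A N1 P L))
  | coeCircle {r r' : Dim} {M : Tm} : Step (Tm.coe Tm.circle r r' M) M
  -- not
  | notel0 {M : Tm} : Step (Tm.notel Dim.d0 M) (notTm M)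
  | notel1 {M : Tm} : Step (Tm.notel Dim.d1 M) M
  | coeNotFlip {ε ε' : Dim} {M : Tm} :
      IsConst ε → IsConst ε' → ε ≠ ε' →
      Step (Tm.coe (Tm.notb (Dim.bvar 0)) ε ε' M) (notTm M)
  | coeNotRefl {ε : Dim} {M : Tm} :
      IsConst ε → Step (Tm.coe (Tm.notb (Dim.bvar 0)) ε ε M) M
  | coeNot0x {y : ℕ} {M : Tm} :
      Step (Tm.coe (Tm.notb (Dim.bvar 0)) Dim.d0 (Dim.fvar y) M)
        (Tm.notel (Dim.fvar y) (notTm M))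
  | coeNot1x {y : ℕ} {M : Tm} :
      Step (Tm.coe (Tm.notb (Dim.bvar 0)) Dim.d1 (Dim.fvar y) M)
        (Tm.notel (Dim.fvar y) M)
  | coeNotxCong {y : ℕ} {r : Dim} {M M' : Tm} :
      Step M M' →
      Step (Tm.coe (Tm.notb (Dim.bvar 0)) (Dim.fvar y) r M)
        (Tm.coe (Tm.notb (Dim.bvar 0)) (Dim.fvar y) r M')
  | coeNotxNotel {y : ℕ} {r : Dim} {M : Tm} :
      Step (Tm.coe (Tm.notb (Dim.bvar 0)) (Dim.fvar y) r (Tm.notel (Dim.fvar y) M))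
        (Tm.notel r M)
  | coeNotOther {y : ℕ} {r r' : Dim} {M : Tm} :
      Step (Tm.coe (Tm.notb (Dim.fvar y)) r r' M) M
  | hcomNot {e : Dim} {w : ℕ} {r r' : Dim} {M N0 N1 : Tm} :
      Step (Tm.hcom e (Tm.notb (Dim.fvar w)) r r' M N0 N1)
        (Tm.notel (Dim.fvar w)
          (Tm.hcom e Tm.bool r r'
            (Tm.coe (Tm.notb (Dim.bvar 0)) (Dim.fvar w) Dim.d1 M)
            (Tm.coe (Tm.notb (Dim.bvar 0)) (Dim.fvar w) Dim.d1 N0)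
            (Tm.coe (Tm.notb (Dim.bvar 0)) (Dim.fvar w) Dim.d1 N1)))

/-- Iterated evaluation `M ↦* M′`. -/
def Steps : Tm → Tm → Prop := Relation.ReflTransGen Step

/-- Evaluation `M ⇓ V`. -/
def Eval (M V : Tm) : Prop := Steps M V ∧ IsVal V

/-- `ψ` is a total dimension substitution from `Ψ′` to `Ψ`: every name in `Ψ`
is sent to `0`, `1`, or a name in `Ψ′`. -/
def DSubst (ψ : ℕ → Dim) (Ψ' Ψ : Finset ℕ) : Prop :=
  ∀ x ∈ Ψ, ψ x = Dim.d0 ∨ ψ x = Dim.d1 ∨ ∃ y ∈ Ψ', ψ x = Dim.fvar y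

/-- Composition of dimension substitutions: first `ψ₁`, then `ψ₂`
(so that `M(comp ψ₁ ψ₂) = (Mψ₁)ψ₂`). -/
def dcomp (ψ₁ ψ₂ : ℕ → Dim) : ℕ → Dim := fun x => (ψ₁ x).subst ψ₂

/-- A candidate cubical type system: it designates certain values of each
dimension as naming PERs on values of the same dimension. -/
structure TypeSys where
  /-- The value `A` names a PER at dimension context `Ψ`. -/
  isPer : Finset ℕ → Tm → Prop
  /-- `M ≈ N ∈ ⟦A⟧_Ψ` : values `M`, `N` are related in the PER named by the
  value `A` at `Ψ`. -/
  vper : Finset ℕ → Tm → Tm → Tm → Prop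
  vper_symm : ∀ {Ψ A M N}, vper Ψ A M N → vper Ψ A N M
  vper_trans : ∀ {Ψ A M N P}, vper Ψ A M N → vper Ψ A N P → vper Ψ A M P

namespace TypeSys

variable (τ : TypeSys)

/-- The values `A` and `B` name equal PERs at `Ψ`. -/
def eqPer (Ψ : Finset ℕ) (A B : Tm) : Prop :=
  τ.isPer Ψ A ∧ τ.isPer Ψ B ∧ ∀ M N, (τ.vper Ψ A M N ↔ τ.vper Ψ B M N)

/-- `A ≐ B pretype [Ψ]` : all iterated dimension-substitution instances of `A`
and `B` evaluate coherently to values naming equal PERs. -/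
def ceqPretype (Ψ : Finset ℕ) (A B : Tm) : Prop :=
  ∀ (Ψ₁ Ψ₂ : Finset ℕ) (ψ₁ ψ₂ : ℕ → Dim),
    DSubst ψ₁ Ψ₁ Ψ → DSubst ψ₂ Ψ₂ Ψ₁ →
    ∃ A₁ A₂ A₁₂ B₁ B₂ B₁₂,
      Eval (A.dsubst ψ₁) A₁ ∧ Eval (A₁.dsubst ψ₂) A₂ ∧
      Eval (A.dsubst (dcomp ψ₁ ψ₂)) A₁₂ ∧
      Eval (B.dsubst ψ₁) B₁ ∧ Eval (B₁.dsubst ψ₂) B₂ ∧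
      Eval (B.dsubst (dcomp ψ₁ ψ₂)) B₁₂ ∧
      τ.eqPer Ψ₂ A₂ A₁₂ ∧ τ.eqPer Ψ₂ A₁₂ B₂ ∧ τ.eqPer Ψ₂ B₂ B₁₂

/-- `A pretype [Ψ]`. -/
def cpretype (Ψ : Finset ℕ) (A : Tm) : Prop := τ.ceqPretype Ψ A A

/-- `M ≐ N ∈ A [Ψ]` : all iterated dimension-substitution instances of `M` and
`N` evaluate coherently to values related in the PER named by the value of the
corresponding instance of `A`. -/
def ceqTm (Ψ : Finset ℕ) (A M N : Tm) : Prop :=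
  ∀ (Ψ₁ Ψ₂ : Finset ℕ) (ψ₁ ψ₂ : ℕ → Dim),
    DSubst ψ₁ Ψ₁ Ψ → DSubst ψ₂ Ψ₂ Ψ₁ →
    ∃ M₁ M₂ M₁₂ N₁ N₂ N₁₂ A₁₂,
      Eval (M.dsubst ψ₁) M₁ ∧ Eval (M₁.dsubst ψ₂) M₂ ∧
      Eval (M.dsubst (dcomp ψ₁ ψ₂)) M₁₂ ∧
      Eval (N.dsubst ψ₁) N₁ ∧ Eval (N₁.dsubst ψ₂) N₂ ∧
      Eval (N.dsubst (dcomp ψ₁ ψ₂)) N₁₂ ∧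
      Eval (A.dsubst (dcomp ψ₁ ψ₂)) A₁₂ ∧
      τ.vper Ψ₂ A₁₂ M₂ M₁₂ ∧ τ.vper Ψ₂ A₁₂ M₁₂ N₂ ∧ τ.vper Ψ₂ A₁₂ N₂ N₁₂

/-- `M ∈ A [Ψ]`. -/
def cofTm (Ψ : Finset ℕ) (A M : Tm) : Prop := τ.ceqTm Ψ A M M

/-- The pretype `A` is cubical: values related in the PER named by the value of
any instance `Aψ` are related as full members of `Aψ`. -/
def Cubical (Ψ : Finset ℕ) (A : Tm) : Prop :=
  ∀ (Ψ' : Finset ℕ) (ψ : ℕ → Dim), DSubst ψ Ψ' Ψ →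
    ∀ A₀, Eval (A.dsubst ψ) A₀ →
      ∀ M N, τ.vper Ψ' A₀ M N → τ.ceqTm Ψ' (A.dsubst ψ) M N

end TypeSys

/-- The dimension constant associated to a side `ε ∈ {0,1}` (encoded as a
`Bool`). -/
def dc : Bool → Dim := fun b => bif b then Dim.d1 else Dim.d0

/-- Select the `ε` tube of a composition problem. -/
def pick (b : Bool) (N0 N1 : Tm) : Tm := bif b then N1 else N0

namespace TypeSys

variable (τ : TypeSys)

/-- First uniform Kan condition: well-typedness (and congruence) of `hcom`. -/
def Kan1 (Ψ : Finset ℕ) (A : Tm) : Prop :=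
  ∀ (Ψ' : Finset ℕ) (x : ℕ), x ∉ Ψ' →
  ∀ ψ : ℕ → Dim, DSubst ψ (insert x Ψ') Ψ →
  ∀ r r' : Dim, wfDim (insert x Ψ') r → wfDim (insert x Ψ') r' →
  ∀ y : ℕ, y ∉ insert x Ψ' →
  ∀ M O N0 N1 P0 P1 : Tm,
    τ.ceqTm (insert x Ψ') (A.dsubst ψ) M O →
    (∀ b : Bool,
      τ.ceqTm (insert y Ψ') ((A.dsubst ψ).dsubstName x (dc b))
        (((pick b N0 N1).dopen (Dim.fvar y)).dsubstName x (dc b))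
        (((pick b P0 P1).dopen (Dim.fvar y)).dsubstName x (dc b))) →
    (∀ b : Bool,
      τ.ceqTm Ψ' ((A.dsubst ψ).dsubstName x (dc b))
        (((pick b N0 N1).dopen r).dsubstName x (dc b))
        (M.dsubstName x (dc b))) →
    τ.ceqTm (insert x Ψ') (A.dsubst ψ)
      (Tm.hcom (Dim.fvar x) (A.dsubst ψ) r r' M N0 N1)
      (Tm.hcom (Dim.fvar x) (A.dsubst ψ) r r' O P0 P1)

/-- Second uniform Kan condition: `hcom` from `r` to `r` is its cap. -/
def Kan2 (Ψ : Finset ℕ) (A : Tm) : Prop :=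
  ∀ (Ψ' : Finset ℕ) (x : ℕ), x ∉ Ψ' →
  ∀ ψ : ℕ → Dim, DSubst ψ (insert x Ψ') Ψ →
  ∀ r : Dim, wfDim (insert x Ψ') r →
  ∀ y : ℕ, y ∉ insert x Ψ' →
  ∀ M N0 N1 : Tm,
    τ.cofTm (insert x Ψ') (A.dsubst ψ) M →
    (∀ b : Bool,
      τ.cofTm (insert y Ψ') ((A.dsubst ψ).dsubstName x (dc b))
        (((pick b N0 N1).dopen (Dim.fvar y)).dsubstName x (dc b))) →
    (∀ b : Bool,
      τ.ceqTm Ψ' ((A.dsubst ψ).dsubstName x (dc b))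
        (((pick b N0 N1).dopen r).dsubstName x (dc b))
        (M.dsubstName x (dc b))) →
    τ.ceqTm (insert x Ψ') (A.dsubst ψ)
      (Tm.hcom (Dim.fvar x) (A.dsubst ψ) r r M N0 N1) M

/-- Third uniform Kan condition: `hcom` of extent a constant `ε` is its `ε`
tube face. -/
def Kan3 (Ψ : Finset ℕ) (A : Tm) : Prop :=
  ∀ (Ψ' : Finset ℕ) (ψ : ℕ → Dim), DSubst ψ Ψ' Ψ →
  ∀ r r' : Dim, wfDim Ψ' r → wfDim Ψ' r' →
  ∀ y : ℕ, y ∉ Ψ' →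
  ∀ (b : Bool) (M N0 N1 : Tm),
    τ.cofTm Ψ' (A.dsubst ψ) M →
    τ.cofTm (insert y Ψ') (A.dsubst ψ) ((pick b N0 N1).dopen (Dim.fvar y)) →
    τ.ceqTm Ψ' (A.dsubst ψ) ((pick b N0 N1).dopen r) M →
    τ.ceqTm Ψ' (A.dsubst ψ)
      (Tm.hcom (dc b) (A.dsubst ψ) r r' M N0 N1)
      ((pick b N0 N1).dopen r')

/-- Fourth uniform Kan condition: well-typedness (and congruence) of `coe`. -/
def Kan4 (Ψ : Finset ℕ) (A : Tm) : Prop :=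
  ∀ (Ψ' : Finset ℕ) (x : ℕ), x ∉ Ψ' →
  ∀ ψ : ℕ → Dim, DSubst ψ (insert x Ψ') Ψ →
  ∀ r r' : Dim, wfDim Ψ' r → wfDim Ψ' r' →
  ∀ M N : Tm,
    τ.ceqTm Ψ' ((A.dsubst ψ).dsubstName x r) M N →
    τ.ceqTm Ψ' ((A.dsubst ψ).dsubstName x r')
      (Tm.coe ((A.dsubst ψ).close x) r r' M)
      (Tm.coe ((A.dsubst ψ).close x) r r' N)

/-- The pretype `A` is (uniformly) Kan. -/
def isKan (Ψ : Finset ℕ) (A : Tm) : Prop :=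
  τ.Kan1 Ψ A ∧ τ.Kan2 Ψ A ∧ τ.Kan3 Ψ A ∧ τ.Kan4 Ψ A

/-- `A type [Ψ]` : `A` is a cubical Kan pretype. -/
def ctype (Ψ : Finset ℕ) (A : Tm) : Prop :=
  τ.cpretype Ψ A ∧ τ.Cubical Ψ A ∧ τ.isKan Ψ A

/-- The open judgment `Γ ≫ M ≐ M′ ∈ B [Ψ]`, defined by functionality.  The
context is a list of pretypes, the head corresponding to the innermost
(de Bruijn index `0`) term variable. -/
def eqOpen (t : TypeSys) : Finset ℕ → List Tm → Tm → Tm → Tm → Prop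
  | Ψ, [], B, M, M' => t.ceqTm Ψ B M M'
  | Ψ, A :: Γ, B, M, M' =>
      ∀ (Ψ' : Finset ℕ) (ψ : ℕ → Dim), DSubst ψ Ψ' Ψ →
      ∀ N N' : Tm,
        eqOpen t Ψ' (Γ.map (Tm.dsubst ψ)) (A.dsubst ψ) N N' →
        eqOpen t Ψ' (Γ.map (Tm.dsubst ψ)) (B.dsubst ψ)
          ((M.dsubst ψ).tsubst 0 N) ((M'.dsubst ψ).tsubst 0 N')
  termination_by _ Γ _ _ _ => Γ.length
  decreasing_by all_goals (simp [List.length_map]; try omega)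

/-- Equal simultaneous closing term substitutions `γ ≐ γ′ ∈ Γ [Ψ]`
(componentwise equal elements of the pretypes of `Γ`). -/
def ceqSubst (t : TypeSys) (Ψ : Finset ℕ) : List Tm → List Tm → List Tm → Prop
  | [], [], [] => True
  | A :: Γ, N :: γ, N' :: γ' => t.ceqTm Ψ A N N' ∧ ceqSubst t Ψ Γ γ γ'
  | _, _, _ => False

end TypeSys

/-- The PER of the booleans, as a higher inductive type: the least relation
containing `true ≈ true`, `false ≈ false`, and relating formal `hcom` values
with equal caps and tubes (relative to the ambient type system `τ`). -/
inductive BoolPer (τ : TypeSys) : Finset ℕ → Tm → Tm → Prop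
  | tt (Ψ : Finset ℕ) : BoolPer τ Ψ Tm.tt Tm.tt
  | ff (Ψ : Finset ℕ) : BoolPer τ Ψ Tm.ff Tm.ff
  | hcom (Ψ : Finset ℕ) (x : ℕ) (r r' : Dim) (y : ℕ)
      (M O N0 N1 P0 P1 : Tm) :
      x ∉ Ψ → wfDim (insert x Ψ) r → wfDim (insert x Ψ) r' → r ≠ r' →
      y ∉ insert x Ψ →
      τ.ceqTm (insert x Ψ) Tm.bool M O →
      (∀ b : Bool,
        τ.ceqTm (insert y Ψ) Tm.bool
          (((pick b N0 N1).dopen (Dim.fvar y)).dsubstName x (dc b))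
          (((pick b P0 P1).dopen (Dim.fvar y)).dsubstName x (dc b))) →
      (∀ b : Bool,
        τ.ceqTm Ψ Tm.bool
          (((pick b N0 N1).dopen r).dsubstName x (dc b))
          (M.dsubstName x (dc b))) →
      BoolPer τ (insert x Ψ)
        (Tm.hcom (Dim.fvar x) Tm.bool r r' M N0 N1)
        (Tm.hcom (Dim.fvar x) Tm.bool r r' O P0 P1)

/-- The PER of the circle, as a higher inductive type. -/
inductive CirclePer (τ : TypeSys) : Finset ℕ → Tm → Tm → Prop
  | base (Ψ : Finset ℕ) : CirclePer τ Ψ Tm.base Tm.base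
  | loop (Ψ : Finset ℕ) (x : ℕ) :
      x ∈ Ψ → CirclePer τ Ψ (Tm.loop (Dim.fvar x)) (Tm.loop (Dim.fvar x))
  | hcom (Ψ : Finset ℕ) (x : ℕ) (r r' : Dim) (y : ℕ)
      (M O N0 N1 P0 P1 : Tm) :
      x ∉ Ψ → wfDim (insert x Ψ) r → wfDim (insert x Ψ) r' → r ≠ r' →
      y ∉ insert x Ψ →
      τ.ceqTm (insert x Ψ) Tm.circle M O →
      (∀ b : Bool,
        τ.ceqTm (insert y Ψ) Tm.circle
          (((pick b N0 N1).dopen (Dim.fvar y)).dsubstName x (dc b))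
          (((pick b P0 P1).dopen (Dim.fvar y)).dsubstName x (dc b))) →
      (∀ b : Bool,
        τ.ceqTm Ψ Tm.circle
          (((pick b N0 N1).dopen r).dsubstName x (dc b))
          (M.dsubstName x (dc b))) →
      CirclePer τ (insert x Ψ)
        (Tm.hcom (Dim.fvar x) Tm.circle r r' M N0 N1)
        (Tm.hcom (Dim.fvar x) Tm.circle r r' O P0 P1)

/-- The PER of a product type `A × B`. -/
def ProdPer (τ : TypeSys) (Ψ : Finset ℕ) (A B M N : Tm) : Prop :=
  ∃ M₁ M₂ N₁ N₂, M = Tm.pair M₁ N₁ ∧ N = Tm.pair M₂ N₂ ∧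
    τ.ceqTm Ψ A M₁ M₂ ∧ τ.ceqTm Ψ B N₁ N₂

/-- The PER of a function type `A → B`. -/
def ArrPer (τ : TypeSys) (Ψ : Finset ℕ) (A B M N : Tm) : Prop :=
  ∃ M₁ M₂, M = Tm.lam M₁ ∧ N = Tm.lam M₂ ∧ τ.eqOpen Ψ [A] B M₁ M₂

/-- The PER of the line `not(x)`. -/
def NotPer (τ : TypeSys) (Ψ : Finset ℕ) (x : ℕ) (M N : Tm) : Prop :=
  ∃ M' N', M = Tm.notel (Dim.fvar x) M' ∧ N = Tm.notel (Dim.fvar x) N' ∧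
    τ.ceqTm Ψ Tm.bool M' N'

/-- A cubical type system interpreting the type formers of the paper:
`bool` and `S¹` name their (least, higher inductive) PERs, products,
functions, and the line `not(x)` name the PERs described in the paper. -/
structure StdTypeSys extends TypeSys where
  bool_isPer : ∀ Ψ, isPer Ψ Tm.bool
  bool_vper : ∀ Ψ M N, vper Ψ Tm.bool M N ↔ BoolPer toTypeSys Ψ M N
  circle_isPer : ∀ Ψ, isPer Ψ Tm.circle
  circle_vper : ∀ Ψ M N, vper Ψ Tm.circle M N ↔ CirclePer toTypeSys Ψ M N
  prod_isPer : ∀ Ψ A B, toTypeSys.ctype Ψ A → toTypeSys.ctype Ψ B →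
    isPer Ψ (Tm.prod A B)
  prod_vper : ∀ Ψ A B M N, toTypeSys.ctype Ψ A → toTypeSys.ctype Ψ B →
    (vper Ψ (Tm.prod A B) M N ↔ ProdPer toTypeSys Ψ A B M N)
  arr_isPer : ∀ Ψ A B, toTypeSys.ctype Ψ A → toTypeSys.ctype Ψ B →
    isPer Ψ (Tm.arr A B)
  arr_vper : ∀ Ψ A B M N, toTypeSys.ctype Ψ A → toTypeSys.ctype Ψ B →
    (vper Ψ (Tm.arr A B) M N ↔ ArrPer toTypeSys Ψ A B M N)
  not_isPer : ∀ Ψ x, x ∈ Ψ → isPer Ψ (Tm.notb (Dim.fvar x))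
  not_vper : ∀ Ψ x, x ∈ Ψ → ∀ M N,
    (vper Ψ (Tm.notb (Dim.fvar x)) M N ↔ NotPer toTypeSys Ψ x M N)


theorem IsVal.no_step {V W : Tm} (hV : IsVal V) : ¬ Step V W := by
  intro h
  cases hV <;> cases h <;> simp_all [IsConst] <;> contradiction

theorem Step.det {M N : Tm} (h₁ : Step M N) : ∀ {N'}, Step M N' → N = N' := by
  induction h₁ with
  | coeTy h ih =>
    intro N' h₂
    cases h₂ with
    | coeTy h' => rw [ih h']
    | _ => first | (exfalso; cases h; done) | (exfalso; cases h; simp_all [IsConst]; done)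
  | hcomTy h ih =>
    intro N' h₂
    cases h₂ with
    | hcomTy h' => rw [ih h']
    | _ => first
      | (exfalso; cases h; done)
      | (exfalso; subst_vars; cases h; done)
      | (exfalso; cases h; simp_all [IsConst]; done)
  | appL h ih =>
    intro N' h₂
    cases h₂ with
    | appL h' => rw [ih h']
    | appBeta => exact (IsVal.no_step (.lam _) h).elim
  | fstCong h ih =>
    intro N' h₂
    cases h₂ with
    | fstCong h' => rw [ih h']
    | fstPair => exact (IsVal.no_step (.pair _ _) h).elim
  | sndCong h ih =>
    intro N' h₂
    cases h₂ with
    | sndCong h' => rw [ih h']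
    | sndPair => exact (IsVal.no_step (.pair _ _) h).elim
  | ifbCong h ih =>
    intro N' h₂
    cases h₂ with
    | ifbCong h' => rw [ih h']
    | ifbTrue => cases h
    | ifbFalse => cases h
    | ifbHcom hr => exact (IsVal.no_step (.hcomBool _ _ _ hr) h).elim
  | celimCong h ih =>
    intro N' h₂
    cases h₂ with
    | celimCong h' => rw [ih h']
    | celimBase => cases h
    | celimLoop => exact (IsVal.no_step (.loop _) h).elim
    | celimHcom hr => exact (IsVal.no_step (.hcomCircle _ _ _ hr) h).elim
  | coeNotxCong h ih =>
    intro N' h₂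
    cases h₂ with
    | coeNotxCong h' => rw [ih h']
    | coeNotxNotel => exact (IsVal.no_step (.notel _ _) h).elim
    | coeTy h' => exfalso; cases h'; simp_all [IsConst]
    | coeNotFlip h1 h2 h3 => exfalso; simp_all [IsConst]
    | coeNotRefl h1 => exfalso; simp_all [IsConst]
  | ifbHcom hr =>
    intro N' h₂
    cases h₂ with
    | ifbHcom => rfl
    | ifbCong h => exact (IsVal.no_step (.hcomBool _ _ _ hr) h).elim
  | celimHcom hr =>
    intro N' h₂
    cases h₂ with
    | celimHcom => rfl
    | celimCong h => exact (IsVal.no_step (.hcomCircle _ _ _ hr) h).elim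
  | coeNotxNotel =>
    intro N' h₂
    cases h₂ with
    | coeNotxNotel => rfl
    | coeNotxCong h => exact (IsVal.no_step (.notel _ _) h).elim
    | coeTy h' => exfalso; cases h'; simp_all [IsConst]
    | coeNotFlip h1 h2 h3 => exfalso; simp_all [IsConst]
    | coeNotRefl h1 => exfalso; simp_all [IsConst]
  | _ =>
    intro N' h₂
    subst_vars
    cases h₂ <;> first
      | rfl
      | (exfalso; simp_all [IsConst]; done)
      | (rename_i h; cases h; done)
      | (rename_i h; cases h; simp_all [IsConst]; done)

theorem Eval.det {M V W : Tm} (h₁ : Eval M V) (h₂ : Eval M W) : V = W := by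
  obtain ⟨s₁, v₁⟩ := h₁
  obtain ⟨s₂, v₂⟩ := h₂
  unfold Steps at s₁ s₂
  induction s₁ using Relation.ReflTransGen.head_induction_on with
  | refl =>
    rcases Relation.ReflTransGen.cases_head s₂ with h | ⟨_, h, _⟩
    · exact h
    · exact (v₁.no_step h).elim
  | head h _ ih =>
    rcases Relation.ReflTransGen.cases_head s₂ with h' | ⟨_, h', s⟩
    · subst h'
      exact (v₂.no_step h).elim
    · rw [h.det h'] at ih
      exact ih s

/-- **Pointwise relatedness implies exact equality for well-typed terms**: if
`M ∈ A [Ψ]`, `N ∈ A [Ψ]`, and every instance `Mψ`, `Nψ` evaluates to values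
related in the PER named by the value of `Aψ`, then `M ≐ N ∈ A [Ψ]`. -/
theorem cofTm_to_ceqTm (τ : TypeSys) (Ψ : Finset ℕ) (A M N : Tm)
    (hM : τ.cofTm Ψ A M) (hN : τ.cofTm Ψ A N)
    (h : ∀ (Ψ' : Finset ℕ) (ψ : ℕ → Dim), DSubst ψ Ψ' Ψ →
      ∃ A' M₀ N₀, Eval (A.dsubst ψ) A' ∧ Eval (M.dsubst ψ) M₀ ∧
        Eval (N.dsubst ψ) N₀ ∧ τ.vper Ψ' A' M₀ N₀) :
    τ.ceqTm Ψ A M N := by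
  intro Ψ₁ Ψ₂ ψ₁ ψ₂ h₁ h₂
  have hc : DSubst (dcomp ψ₁ ψ₂) Ψ₂ Ψ := by
    intro x hx
    rcases h₁ x hx with e | e | ⟨y, hy, e⟩
    · simp [dcomp, e, Dim.subst]
    · simp [dcomp, e, Dim.subst]
    · simpa [dcomp, e, Dim.subst] using h₂ y hy
  obtain ⟨M₁, M₂, M₁₂, -, -, -, A₁, m₁, m₂, m₁₂, -, -, -, a₁, rM, -, -⟩ := hM Ψ₁ Ψ₂ ψ₁ ψ₂ h₁ h₂
  obtain ⟨N₁, N₂, N₁₂, -, -, -, A₂, n₁, n₂, n₁₂, -, -, -, a₂, rN, -, -⟩ := hN Ψ₁ Ψ₂ ψ₁ ψ₂ h₁ h₂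
  obtain ⟨A₃, M₀, N₀, a₃, m₀, n₀, r⟩ := h Ψ₂ _ hc
  obtain rfl := a₁.det a₂
  obtain rfl := a₁.det a₃
  obtain rfl := m₁₂.det m₀
  obtain rfl := n₁₂.det n₀
  exact ⟨M₁, M₂, M₁₂, N₁, N₂, N₁₂, A₁, m₁, m₂, m₁₂, n₁, n₂, n₁₂, a₁, rM,
    τ.vper_trans r (τ.vper_symm rN), rN⟩

end CHTT
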